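/- Let M be a loopless matroid on the ground set E = {0,1,…,n}, and let F ⊊ F' be flats of M. Then the vector ∑_G β(M|G/F)·β(M|F'/G)·e_{G∖F} in ℝ^{n+1}, where the sum ranges over all flats G of M with F ⊊ G ⊊ F', is a scalar multiple of the vector e_{F'∖F}. -/

import Mathlib

open Matroid Set

/-- The Möbius function of a collection of "flats" (finsets), defined recursively:
`mob flats F G = 0` if `F ⊄ G`, `1` if `F = G`, and `-∑_{F ⊆ G' ⊊ G} mob flats F G'` otherwise,
the sum being over members `G'` of `flats`. -/
noncomputable def mob {α : Type*} [DecidableEq α] (flats : Finset (Finset α)) :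
    Finset α → Finset α → ℤ
  | F, G =>
    if F ⊆ G then
      if F = G then 1
      else - ∑ G' ∈ (flats.filter fun G' => F ⊆ G' ∧ G' ⊂ G).attach,
        mob flats F G'.1
    else 0
termination_by F G => G.card
decreasing_by
  exact Finset.card_lt_card (Finset.mem_filter.mp G'.2).2.2

/-- The rank of a set `X` in a matroid `M`: the largest cardinality of an independent
subset of `X`. -/
noncomputable def rk {α : Type*} (M : Matroid α) (X : Set α) : ℕ :=
  sSup (Set.ncard '' {I | M.Indep I ∧ I ⊆ X})

/-- An element `e` is a loop of `M` if it belongs to the ground set but to no base. -/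
def mLoop {α : Type*} (M : Matroid α) (e : α) : Prop :=
  e ∈ M.E ∧ ∀ B, M.IsBase B → e ∉ B

/-- An element `e` is a coloop of `M` if it belongs to every base. -/
def mColoop {α : Type*} (M : Matroid α) (e : α) : Prop :=
  ∀ B, M.IsBase B → e ∈ B

/-- A matroid is loopless if it has no loops. -/
def mLoopless {α : Type*} (M : Matroid α) : Prop := ∀ e, ¬ mLoop M e

/-- Contraction of a set `C` in a matroid `M`, defined by duality:
`M / C = (M✶ \ C)✶`, where deletion is restriction to the complement. -/
noncomputable def mContr {α : Type*} (M : Matroid α) (C : Set α) : Matroid α :=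
  (M✶ ↾ (M✶.E \ C))✶

/-- The minor `M|G/F` of `M` obtained by restricting to `G` and contracting `F`. -/
noncomputable def mMinor {α : Type*} (M : Matroid α) (G F : Set α) : Matroid α :=
  mContr (M ↾ G) F

open Classical in
/-- The finset of all flats of a matroid on `Fin m`, as finsets. -/
noncomputable def flatsF {m : ℕ} (M : Matroid (Fin m)) : Finset (Finset (Fin m)) :=
  Finset.univ.filter fun F => M.IsFlat ↑F

open Classical in
/-- The beta invariant `β(M) = (-1)^{r(M)} ∑_{F ∈ L(M)} μ(∅,F) r(F)` of a loopless
matroid `M`; it is `0` if `M` has a loop. -/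
noncomputable def betaInv {m : ℕ} (M : Matroid (Fin m)) : ℤ :=
  if mLoopless M then
    (-1) ^ (rk M M.E) * ∑ F ∈ flatsF M, mob (flatsF M) ∅ F * (rk M ↑F : ℤ)
  else 0

/-- The 0/1 indicator vector of a finset `S ⊆ {0,…,m-1}`, as a vector in `ℝ^m`. -/
def eVec {m : ℕ} (S : Finset (Fin m)) : Fin m → ℝ := fun i => if i ∈ S then 1 else 0

section IncidenceMatrix

variable {L : Type*} [Fintype L] [PartialOrder L] [DecidableLE L]

/-- The matrix of the zeta function of a finite partial order. -/
def zetaMatrix (L : Type*) [PartialOrder L] [DecidableLE L] : Matrix L L ℤ :=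
  Matrix.of fun a b => if a ≤ b then 1 else 0

lemma mul_zetaMatrix_apply (A : Matrix L L ℤ) (a c : L) :
    (A * zetaMatrix L) a c = ∑ h, A a h * if h ≤ c then 1 else 0 := rfl

variable [DecidableEq L]

/-- The matrix `μ R ζ - R`, where `R` is the diagonal matrix of the rank function `r`. -/
def betaMatrix (μ : Matrix L L ℤ) (r : L → ℤ) : Matrix L L ℤ :=
  μ * Matrix.diagonal r * zetaMatrix L - Matrix.diagonal r

/-- The diagonal `0/1` matrix supported on `D`. -/
def indicatorMatrix (D : L → Prop) [DecidablePred D] : Matrix L L ℤ :=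
  Matrix.diagonal fun a => if D a then 1 else 0

lemma mul_diagonal_mul_zetaMatrix_apply (μ : Matrix L L ℤ) (f : L → ℤ) (a c : L) :
    (μ * Matrix.diagonal f * zetaMatrix L) a c = ∑ h, μ a h * f h * if h ≤ c then 1 else 0 := by
  simp only [mul_zetaMatrix_apply, Matrix.mul_diagonal]

variable {μ : Matrix L L ℤ}

lemma mul_diagonal_mul_zetaMatrix_apply_of_not_le
    (hle : ∀ a b, ¬ a ≤ b → μ a b = 0) (f : L → ℤ) {a c : L} (h : ¬ a ≤ c) :
    (μ * Matrix.diagonal f * zetaMatrix L) a c = 0 := by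
  rw [mul_diagonal_mul_zetaMatrix_apply]
  refine Finset.sum_eq_zero fun x _ => ?_
  by_cases hx : x ≤ c
  · rw [hle a x fun hax => h (hax.trans hx)]; simp
  · simp [hx]

lemma betaMatrix_apply_of_not_le
    (hle : ∀ a b, ¬ a ≤ b → μ a b = 0) (r : L → ℤ) {a c : L} (h : ¬ a ≤ c) :
    betaMatrix μ r a c = 0 := by
  have hac : a ≠ c := fun e => h e.le
  simp [betaMatrix, mul_diagonal_mul_zetaMatrix_apply_of_not_le hle r h, hac]

lemma betaMatrix_apply_self
    (hμ : μ * zetaMatrix L = 1) (hle : ∀ a b, ¬ a ≤ b → μ a b = 0) (r : L → ℤ) (a : L) :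
    betaMatrix μ r a a = 0 := by
  have key : ∀ f : L → ℤ, (μ * Matrix.diagonal f * zetaMatrix L) a a = μ a a * f a := by
    intro f
    rw [mul_diagonal_mul_zetaMatrix_apply, Finset.sum_eq_single a]
    · simp
    · intro x _ hxa
      by_cases hx : x ≤ a
      · rw [hle a x fun hax => hxa (le_antisymm hx hax)]; simp
      · simp [hx]
    · simp
  have h1 := key fun _ => 1
  rw [Matrix.diagonal_one, mul_one, hμ, Matrix.one_apply_eq, mul_one] at h1
  simp [betaMatrix, key, ← h1]

variable {D : L → Prop} [DecidablePred D] {j : L → L} {r : L → ℤ}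

/-- A form of Weisner's theorem. -/
lemma mobius_mul_closure
    (hμ : μ * zetaMatrix L = 1) (hD : ∀ a b, a ≤ b → D a → D b)
    (hj : ∀ a c, D c → (j a ≤ c ↔ a ≤ c)) (hjD : ∀ a, D (j a)) :
    μ * (Matrix.of fun a b => if j a = b then 1 else 0) = indicatorMatrix D * μ := by
  have hμ' : zetaMatrix L * μ = 1 := mul_eq_one_comm.mp hμ
  set J : Matrix L L ℤ := Matrix.of fun a b => if j a = b then 1 else 0
  have h : μ * J * zetaMatrix L = indicatorMatrix D := by
    ext a c
    have hJ : ∀ h, (J * zetaMatrix L) h c = if j h ≤ c then 1 else 0 := by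
      intro h
      rw [mul_zetaMatrix_apply, Finset.sum_eq_single (j h)]
      · simp [J]
      · intro x _ hx
        simp [J, hx.symm]
      · simp
    rw [mul_assoc, Matrix.mul_apply]
    simp only [hJ]
    by_cases hc : D c
    · have h1 := congrFun (congrFun hμ a) c
      rw [mul_zetaMatrix_apply] at h1
      simp only [hj _ _ hc, h1, indicatorMatrix, Matrix.diagonal_apply, Matrix.one_apply]
      by_cases hac : a = c
      · subst hac; simp [hc]
      · simp [hac]
    · have h0 : ∀ h, ¬ j h ≤ c := fun h hh => hc (hD _ _ hh (hjD h))
      simp only [h0, if_false, mul_zero, Finset.sum_const_zero, indicatorMatrix,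
        Matrix.diagonal_apply]
      by_cases hac : a = c
      · subst hac; simp [hc]
      · simp [hac]
  calc μ * J = μ * J * (zetaMatrix L * μ) := by rw [hμ', mul_one]
    _ = μ * J * zetaMatrix L * μ := by simp only [mul_assoc]
    _ = _ := by rw [h]

lemma mobius_indicator_zeta_apply
    (hμ : μ * zetaMatrix L = 1) (hD : ∀ a b, a ≤ b → D a → D b)
    (hj : ∀ a c, D c → (j a ≤ c ↔ a ≤ c)) (hjD : ∀ a, D (j a))
    (hr : ∀ a, r (j a) = r a + 1 - if D a then 1 else 0) {a c : L} (ha : ¬ D a) (hc : D c) :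
    (μ * indicatorMatrix D * zetaMatrix L) a c = betaMatrix μ r a c := by
  have hac : a ≠ c := fun e => ha (e ▸ hc)
  set J : Matrix L L ℤ := Matrix.of fun a b => if j a = b then 1 else 0
  have h0 : (μ * (J * Matrix.diagonal r * zetaMatrix L)) a c = 0 := by
    rw [← mul_assoc, ← mul_assoc, mobius_mul_closure hμ hD hj hjD, mul_assoc, mul_assoc,
      indicatorMatrix, Matrix.diagonal_mul, if_neg ha, zero_mul]
  have hJr : ∀ h, (J * Matrix.diagonal r * zetaMatrix L) h c = if h ≤ c then r (j h) else 0 := by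
    intro h
    rw [mul_diagonal_mul_zetaMatrix_apply]
    rw [Finset.sum_eq_single (j h)]
    · simp [J, hj _ _ hc]
    · intro x _ hx
      simp [J, hx.symm]
    · simp
  have h1 := congrFun (congrFun hμ a) c
  rw [mul_zetaMatrix_apply, Matrix.one_apply_ne hac] at h1
  rw [Matrix.mul_apply] at h0
  simp only [hJr, hr] at h0
  rw [betaMatrix, Matrix.sub_apply, Matrix.diagonal_apply_ne _ hac, sub_zero, indicatorMatrix,
    mul_diagonal_mul_zetaMatrix_apply, mul_diagonal_mul_zetaMatrix_apply]
  have h2 : (∑ h, μ a h * r h * if h ≤ c then 1 else 0) + (∑ h, μ a h * if h ≤ c then 1 else 0)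
      - (∑ h, μ a h * (if D h then 1 else 0) * if h ≤ c then 1 else 0) = 0 := by
    rw [← Finset.sum_add_distrib, ← Finset.sum_sub_distrib]
    refine Eq.trans (Finset.sum_congr rfl fun h _ => ?_) h0
    split_ifs <;> ring
  linarith

lemma mobius_indicator_zeta
    (hμ : μ * zetaMatrix L = 1) (hle : ∀ a b, ¬ a ≤ b → μ a b = 0) (hD : ∀ a b, a ≤ b → D a → D b)
    (hj : ∀ a c, D c → (j a ≤ c ↔ a ≤ c)) (hjD : ∀ a, D (j a))
    (hr : ∀ a, r (j a) = r a + 1 - if D a then 1 else 0) :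
    μ * indicatorMatrix D * zetaMatrix L = indicatorMatrix D +
      (betaMatrix μ r * indicatorMatrix D - indicatorMatrix D * betaMatrix μ r) := by
  ext a c
  rw [Matrix.add_apply, Matrix.sub_apply]
  conv_rhs => rw [indicatorMatrix, Matrix.mul_diagonal, Matrix.diagonal_mul, Matrix.diagonal_apply]
  by_cases hac : a ≤ c
  · by_cases ha : D a
    · have hc := hD _ _ hac ha
      have h1 := congrFun (congrFun hμ a) c
      rw [mul_zetaMatrix_apply] at h1
      have : (μ * indicatorMatrix D * zetaMatrix L) a c = (1 : Matrix L L ℤ) a c := by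
        rw [← h1, indicatorMatrix, mul_diagonal_mul_zetaMatrix_apply]
        refine Finset.sum_congr rfl fun h _ => ?_
        by_cases hah : a ≤ h
        · rw [if_pos (hD _ _ hah ha), mul_one]
        · simp [hle _ _ hah]
      simp [this, ha, hc, Matrix.one_apply]
    · by_cases hc : D c
      · rw [mobius_indicator_zeta_apply hμ hD hj hjD hr ha hc]
        simp [ha, hc]
      · have : (μ * indicatorMatrix D * zetaMatrix L) a c = 0 := by
          rw [indicatorMatrix, mul_diagonal_mul_zetaMatrix_apply]
          refine Finset.sum_eq_zero fun h _ => ?_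
          by_cases hhc : h ≤ c
          · rw [if_neg fun hh => hc (hD _ _ hhc hh), mul_zero, zero_mul]
          · simp [hhc]
        simp [this, ha, hc]
  · have h1 : (μ * indicatorMatrix D * zetaMatrix L) a c = 0 :=
      mul_diagonal_mul_zetaMatrix_apply_of_not_le hle _ hac
    have hne : a ≠ c := fun e => hac e.le
    simp [h1, betaMatrix_apply_of_not_le hle r hac, hne]

/-- The right-hand side does not depend on `D`: it comes from the fact that the conjugates
`μ R ζ` and `μ D ζ` of two diagonal matrices commute. -/
theorem two_mul_beta_indicator_beta
    (hμ : μ * zetaMatrix L = 1) (hle : ∀ a b, ¬ a ≤ b → μ a b = 0) (hD : ∀ a b, a ≤ b → D a → D b)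
    (hj : ∀ a c, D c → (j a ≤ c ↔ a ≤ c)) (hjD : ∀ a, D (j a))
    (hr : ∀ a, r (j a) = r a + 1 - if D a then 1 else 0) {a c : L} (ha : ¬ D a) (hc : D c) :
    2 * (betaMatrix μ r * indicatorMatrix D * betaMatrix μ r) a c =
      (betaMatrix μ r * betaMatrix μ r) a c + (1 + r a - r c) * betaMatrix μ r a c := by
  have hμ' : zetaMatrix L * μ = 1 := mul_eq_one_comm.mp hμ
  have hP := mobius_indicator_zeta hμ hle hD hj hjD hr
  have hQ : μ * Matrix.diagonal r * zetaMatrix L = Matrix.diagonal r + betaMatrix μ r := by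
    simp [betaMatrix]
  have hconj : ∀ A B : Matrix L L ℤ,
      (μ * A * zetaMatrix L) * (μ * B * zetaMatrix L) = μ * (A * B) * zetaMatrix L := by
    intro A B
    calc _ = μ * A * (zetaMatrix L * μ) * B * zetaMatrix L := by simp only [mul_assoc]
      _ = _ := by rw [hμ']; simp only [mul_assoc, mul_one]
  have hcomm : Matrix.diagonal r * indicatorMatrix D = indicatorMatrix D * Matrix.diagonal r := by
    rw [indicatorMatrix, Matrix.diagonal_mul_diagonal, Matrix.diagonal_mul_diagonal]
    simp only [mul_comm]
  have h := hconj (Matrix.diagonal r) (indicatorMatrix D)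
  rw [hcomm, ← hconj, hQ, hP] at h
  generalize betaMatrix μ r = b at h ⊢
  have hcomb : Matrix.diagonal r * (b * indicatorMatrix D)
      - Matrix.diagonal r * (indicatorMatrix D * b) - b * indicatorMatrix D * Matrix.diagonal r
      + indicatorMatrix D * b * Matrix.diagonal r
      + (b * indicatorMatrix D - indicatorMatrix D * b)
      + (b * b * indicatorMatrix D - b * indicatorMatrix D * b - b * indicatorMatrix D * b
        + indicatorMatrix D * (b * b)) = 0 := by
    rw [← sub_eq_zero] at h
    have h' := sub_eq_zero.mpr hcomm
    refine Eq.trans ?_ ((congrArg₂ (· - ·) h h').trans (sub_zero 0))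
    noncomm_ring
  have h1 := congrFun (congrFun hcomb a) c
  simp only [Matrix.add_apply, Matrix.sub_apply, Matrix.zero_apply] at h1
  set X := (b * indicatorMatrix D * b) a c
  simp only [indicatorMatrix, Matrix.diagonal_mul, Matrix.mul_diagonal, if_neg ha, if_pos hc] at h1
  linarith

end IncidenceMatrix

section Mob

variable {α : Type*} [DecidableEq α] {flats : Finset (Finset α)}

lemma mob_of_not_subset {F G : Finset α} (h : ¬ F ⊆ G) : mob flats F G = 0 := by
  rw [mob, if_neg h]

lemma mob_self (F : Finset α) : mob flats F F = 1 := by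
  rw [mob, if_pos subset_rfl, if_pos rfl]

lemma mob_of_ssubset {F G : Finset α} (h : F ⊂ G) :
    mob flats F G = - ∑ H ∈ flats with F ⊆ H ∧ H ⊂ G, mob flats F H := by
  rw [mob, if_pos h.subset, if_neg h.ne]
  exact congrArg Neg.neg (Finset.sum_attach _ fun H => mob flats F H)

lemma sum_mob_eq_zero {F G : Finset α} (hG : G ∈ flats) (h : F ⊂ G) :
    ∑ H ∈ flats with F ⊆ H ∧ H ⊆ G, mob flats F H = 0 := by
  have : (flats.filter fun H => F ⊆ H ∧ H ⊆ G) =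
      insert G (flats.filter fun H => F ⊆ H ∧ H ⊂ G) := by
    ext H
    simp only [Finset.mem_filter, Finset.mem_insert]
    constructor
    · rintro ⟨h1, h2, h3⟩
      rcases h3.eq_or_ssubset with e | e
      · exact Or.inl e
      · exact Or.inr ⟨h1, h2, e⟩
    · rintro (rfl | ⟨h1, h2, h3⟩)
      · exact ⟨hG, h.subset, subset_rfl⟩
      · exact ⟨h1, h2, h3.subset⟩
  rw [this, Finset.sum_insert (by simp), mob_of_ssubset h]
  ring

end Mob

section Minor

variable {m : ℕ} {M : Matroid (Fin m)}

lemma mem_flatsF {G : Finset (Fin m)} : G ∈ flatsF M ↔ M.IsFlat ↑G := by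
  simp [flatsF]

lemma cast_rk (M : Matroid (Fin m)) (X : Set (Fin m)) : (rk M X : ℕ∞) = M.eRk X := by
  obtain ⟨I, hI⟩ := M.exists_isBasis' X
  have hfin : ∀ J : Set (Fin m), J.Finite := fun J => J.toFinite
  have : rk M X = I.ncard := by
    refine IsGreatest.csSup_eq ⟨⟨I, ⟨hI.indep, hI.subset⟩, rfl⟩, ?_⟩
    rintro _ ⟨J, ⟨hJ, hJX⟩, rfl⟩
    have := hJ.encard_le_eRk_of_subset hJX
    rw [← hI.encard_eq_eRk, ← (hfin J).cast_ncard_eq, ← (hfin I).cast_ncard_eq] at this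
    exact_mod_cast this
  rw [this, (hfin I).cast_ncard_eq, hI.encard_eq_eRk]

lemma mMinor_eq (M : Matroid (Fin m)) (G F : Set (Fin m)) : mMinor M G F = (M ↾ G) ／ F := rfl

lemma mMinor_ground (M : Matroid (Fin m)) (G F : Set (Fin m)) : (mMinor M G F).E = G \ F := rfl

lemma mMinor_closure {F G X : Set (Fin m)} (hG : M.IsFlat G) (hFG : F ⊆ G) (hX : X ⊆ G) :
    (mMinor M G F).closure X = M.closure (X ∪ F) \ F := by
  rw [mMinor_eq, contract_closure_eq, restrict_closure_eq M (union_subset hX hFG) hG.subset_ground,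
    inter_eq_self_of_subset_left]
  rw [← hG.closure]
  exact M.closure_subset_closure (union_subset hX hFG)

lemma mMinor_isFlat_sdiff_iff {F G H : Set (Fin m)} (hG : M.IsFlat G) (hFH : F ⊆ H) (hHG : H ⊆ G) :
    (mMinor M G F).IsFlat (H \ F) ↔ M.IsFlat H := by
  have hHE := hHG.trans hG.subset_ground
  rw [isFlat_iff_closure_eq, isFlat_iff_closure_eq,
    mMinor_closure hG (hFH.trans hHG) (sdiff_subset.trans hHG), sdiff_union_of_subset hFH]
  constructor
  · intro h
    have h' : F ⊆ M.closure H := hFH.trans (M.subset_closure H)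
    rw [← sdiff_union_of_subset h', h, sdiff_union_of_subset hFH]
  · intro h
    rw [h]

lemma rk_mMinor_add {F G H : Set (Fin m)} (hG : M.IsFlat G) (hFH : F ⊆ H) (hHG : H ⊆ G) :
    rk (mMinor M G F) (H \ F) + rk M F = rk M H := by
  have hHE := hHG.trans hG.subset_ground
  obtain ⟨I, hI⟩ := M.exists_isBasis F (hFH.trans hHE)
  obtain ⟨J, hJ, hIJ⟩ := hI.indep.subset_isBasis_of_subset (hI.subset.trans hFH) hHE
  have hI' := (isBasis_restrict_iff hG.subset_ground).2 ⟨hI, hFH.trans hHG⟩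
  have hJ' := (isBasis_restrict_iff hG.subset_ground).2 ⟨hJ, hHG⟩
  have hN : (mMinor M G F).IsBasis (J \ I) (H \ F) := by
    rw [mMinor_eq, hI'.contract_eq_contract_delete, delete_isBasis_iff]
    exact ⟨hI'.contract_sdiff_isBasis_sdiff hJ' hIJ, disjoint_sdiff_left.mono_right sdiff_subset⟩
  have key : ((rk (mMinor M G F) (H \ F) + rk M F : ℕ) : ℕ∞) = rk M H := by
    push_cast
    rw [cast_rk, cast_rk, cast_rk, ← hN.encard_eq_eRk, ← hI.encard_eq_eRk, ← hJ.encard_eq_eRk,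
      encard_sdiff_add_encard_of_subset hIJ]
  exact_mod_cast key

lemma mMinor_loopless {F G : Set (Fin m)} (hF : M.IsFlat F) (hG : M.IsFlat G) (hFG : F ⊆ G) :
    mLoopless (mMinor M G F) := by
  rintro e ⟨heE, he⟩
  have hl : (mMinor M G F).IsLoop e := by
    rw [← singleton_dep, dep_iff, singleton_subset_iff]
    refine ⟨fun hi => ?_, heE⟩
    obtain ⟨B, hB, heB⟩ := hi.exists_isBase_superset
    exact he B hB (heB rfl)
  have hc : e ∈ (mMinor M G F).closure ∅ := hl
  rw [mMinor_closure hG hFG (empty_subset _), empty_union, hF.closure, sdiff_self] at hc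
  exact hc

lemma sum_flatsF_mMinor {F G : Finset (Fin m)} (hG : M.IsFlat ↑G) (hFG : F ⊆ G)
    (p : Finset (Fin m) → Prop) [DecidablePred p] (f : Finset (Fin m) → ℤ) :
    ∑ K ∈ (flatsF (mMinor M ↑G ↑F)).filter p, f K =
      ∑ H ∈ (flatsF M).filter (fun H => (F ⊆ H ∧ H ⊆ G) ∧ p (H \ F)), f (H \ F) := by
  symm
  refine Finset.sum_nbij (· \ F) ?_ ?_ ?_ fun _ _ => rfl
  · intro H hH
    simp only [Finset.mem_filter, mem_flatsF] at hH ⊢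
    refine ⟨?_, hH.2.2⟩
    rw [Finset.coe_sdiff, mMinor_isFlat_sdiff_iff hG (by exact_mod_cast hH.2.1.1)
      (by exact_mod_cast hH.2.1.2)]
    exact hH.1
  · intro H hH K hK h
    simp only [Finset.coe_filter, mem_ofPred_eq] at hH hK
    simp only at h
    rw [← Finset.sdiff_union_of_subset hH.2.1.1, h, Finset.sdiff_union_of_subset hK.2.1.1]
  · intro K hK
    simp only [Finset.coe_filter, mem_ofPred_eq, mem_flatsF] at hK
    have hKE : (K : Set (Fin m)) ⊆ ↑G \ ↑F := hK.1.subset_ground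
    have hKd : Disjoint K F := by
      exact_mod_cast (subset_sdiff.1 hKE).2
    have hKG : K ⊆ G := by exact_mod_cast (subset_sdiff.1 hKE).1
    have hs : (K ∪ F) \ F = K := by
      rw [Finset.union_sdiff_right, hKd.sdiff_eq_left]
    refine ⟨K ∪ F, ?_, hs⟩
    simp only [Finset.coe_filter, mem_ofPred_eq, mem_flatsF, hs]
    have hu : K ∪ F ⊆ G := Finset.union_subset hKG hFG
    refine ⟨?_, ⟨Finset.subset_union_right, hu⟩, hK.2⟩
    rw [← mMinor_isFlat_sdiff_iff (F := ↑F) hG (by simp) (by exact_mod_cast hu),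
      ← Finset.coe_sdiff, hs]
    exact hK.1

lemma mob_mMinor {F G : Finset (Fin m)} (hG : M.IsFlat ↑G) (hFG : F ⊆ G) :
    ∀ H : Finset (Fin m), F ⊆ H → H ⊆ G →
      mob (flatsF (mMinor M ↑G ↑F)) ∅ (H \ F) = mob (flatsF M) F H := by
  intro H
  induction H using Finset.strongInduction with
  | H H ih =>
    intro hFH hHG
    rcases hFH.eq_or_ssubset with rfl | hlt
    · rw [Finset.sdiff_self, mob_self, mob_self]
    · have hne : ∅ ⊂ H \ F := by
        rw [Finset.empty_ssubset, Finset.sdiff_nonempty]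
        exact hlt.not_subset
      rw [mob_of_ssubset hne, mob_of_ssubset hlt, sum_flatsF_mMinor hG hFG]
      have hset : (flatsF M).filter (fun K => (F ⊆ K ∧ K ⊆ G) ∧ ∅ ⊆ K \ F ∧ K \ F ⊂ H \ F) =
          (flatsF M).filter fun K => F ⊆ K ∧ K ⊂ H := by
        refine Finset.filter_congr fun K _ => ?_
        constructor
        · rintro ⟨⟨h1, -⟩, -, h3⟩
          have hsub : K ⊆ H := by
            rw [← Finset.sdiff_union_of_subset h1, ← Finset.sdiff_union_of_subset hFH]
            exact Finset.union_subset_union_left h3.subset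
          refine ⟨h1, hsub.ssubset_of_ne ?_⟩
          rintro rfl
          exact h3.ne rfl
        · rintro ⟨h1, h2⟩
          refine ⟨⟨h1, h2.subset.trans hHG⟩, Finset.empty_subset _, ?_⟩
          refine (Finset.sdiff_subset_sdiff h2.subset subset_rfl).ssubset_of_ne fun h => h2.ne ?_
          rw [← Finset.sdiff_union_of_subset h1, h, Finset.sdiff_union_of_subset hFH]
      rw [hset]
      congr 1
      refine Finset.sum_congr rfl fun K hK => ?_
      obtain ⟨-, h1, h2⟩ := Finset.mem_filter.1 hK
      exact ih K h2 h1 (h2.subset.trans hHG)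

lemma betaInv_mMinor {F G : Finset (Fin m)} (hF : M.IsFlat ↑F) (hG : M.IsFlat ↑G) (hFG : F ⊂ G) :
    betaInv (mMinor M ↑G ↑F) = (-1) ^ (rk M ↑F + rk M ↑G) *
      ∑ H ∈ flatsF M with F ⊆ H ∧ H ⊆ G, mob (flatsF M) F H * (rk M ↑H : ℤ) := by
  have hFG' : (F : Set (Fin m)) ⊆ ↑G := by exact_mod_cast hFG.subset
  rw [betaInv, if_pos (mMinor_loopless hF hG hFG')]
  congr 1
  · rw [mMinor_ground, ← rk_mMinor_add hG hFG' subset_rfl, add_left_comm, pow_add, ← two_mul,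
      pow_mul]
    simp
  · have h := sum_flatsF_mMinor hG hFG.subset (fun _ => True)
      fun K => mob (flatsF (mMinor M ↑G ↑F)) ∅ K * (rk (mMinor M ↑G ↑F) ↑K : ℤ)
    simp only [Finset.filter_true, and_true] at h
    rw [h]
    have h0 := congrArg (· * (rk M ↑F : ℤ)) (sum_mob_eq_zero (mem_flatsF.2 hG) hFG)
    simp only [zero_mul, Finset.sum_mul] at h0
    rw [← add_zero (∑ H ∈ _, _), ← h0, ← Finset.sum_add_distrib]
    refine Finset.sum_congr rfl fun K hK => ?_
    obtain ⟨-, h1, h2⟩ := Finset.mem_filter.1 hK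
    rw [mob_mMinor hG hFG.subset K h1 h2, Finset.coe_sdiff,
      ← rk_mMinor_add (F := ↑F) (H := ↑K) hG (by exact_mod_cast h1) (by exact_mod_cast h2)]
    push_cast
    ring

end Minor

section FlatLattice

variable {m : ℕ} {M : Matroid (Fin m)}

/-- The flats of a matroid on `Fin m`, ordered by inclusion. -/
abbrev FlatLattice (M : Matroid (Fin m)) : Type := {G : Finset (Fin m) // G ∈ flatsF M}

/-- The Möbius function of the lattice of flats, as a matrix. -/
noncomputable def flatMobius (M : Matroid (Fin m)) : Matrix (FlatLattice M) (FlatLattice M) ℤ :=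
  Matrix.of fun F G => mob (flatsF M) F.1 G.1

/-- The rank function on the lattice of flats. -/
noncomputable def flatRank (M : Matroid (Fin m)) (G : FlatLattice M) : ℤ := rk M ↑G.1

open Classical in
/-- The flat spanned by `G` and `i`. -/
noncomputable def flatInsert (M : Matroid (Fin m)) (i : Fin m) (G : FlatLattice M) :
    FlatLattice M :=
  ⟨(M.closure (insert i ↑G.1)).toFinset, by rw [mem_flatsF, coe_toFinset]; exact M.isFlat_closure _⟩

lemma coe_flatInsert (i : Fin m) (G : FlatLattice M) :
    ((flatInsert M i G).1 : Set (Fin m)) = M.closure (insert i ↑G.1) := by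
  simp [flatInsert]

lemma flatMobius_apply_of_not_le (F G : FlatLattice M) (h : ¬ F ≤ G) : flatMobius M F G = 0 :=
  mob_of_not_subset h

lemma sum_flatMobius_mul (f : Finset (Fin m) → ℤ) (F G : FlatLattice M) :
    (∑ H, flatMobius M F H * f H.1 * if H ≤ G then 1 else 0) =
      ∑ H ∈ flatsF M with F.1 ⊆ H ∧ H ⊆ G.1, mob (flatsF M) F.1 H * f H := by
  rw [Finset.sum_filter, ← Finset.sum_coe_sort (flatsF M)]
  refine Finset.sum_congr rfl fun H _ => ?_
  have hle : H ≤ G ↔ H.1 ⊆ G.1 := Iff.rfl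
  by_cases h1 : F.1 ⊆ H.1
  · by_cases h2 : H.1 ⊆ G.1
    · rw [if_pos (hle.2 h2), if_pos ⟨h1, h2⟩, mul_one]
      rfl
    · rw [if_neg fun h => h2 (hle.1 h), if_neg fun h => h2 h.2, mul_zero]
  · rw [flatMobius_apply_of_not_le F H h1, zero_mul, zero_mul, if_neg fun h => h1 h.1]

lemma flatMobius_mul_zeta : flatMobius M * zetaMatrix (FlatLattice M) = 1 := by
  ext F G
  have h := sum_flatMobius_mul (fun _ => 1) F G
  simp only [mul_one] at h
  rw [mul_zetaMatrix_apply, h]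
  by_cases hFG : F ≤ G
  · rcases hFG.eq_or_lt with rfl | hlt
    · have : (flatsF M).filter (fun H => F.1 ⊆ H ∧ H ⊆ F.1) = {F.1} := by
        ext H
        simp only [Finset.mem_filter, Finset.mem_singleton]
        constructor
        · rintro ⟨-, h1, h2⟩
          exact h2.antisymm h1
        · rintro rfl
          exact ⟨F.2, subset_rfl, subset_rfl⟩
      rw [this, Finset.sum_singleton, mob_self, Matrix.one_apply_eq]
    · rw [sum_mob_eq_zero G.2 hlt, Matrix.one_apply_ne hlt.ne]
  · rw [Matrix.one_apply_ne fun e => hFG e.le, Finset.filter_false_of_mem, Finset.sum_empty]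
    exact fun H _ h => hFG (Finset.Subset.trans h.1 h.2)

lemma betaInv_mMinor_eq_betaMatrix (F G : FlatLattice M) (hFG : F < G) :
    betaInv (mMinor M ↑G.1 ↑F.1) = (-1) ^ (rk M ↑F.1 + rk M ↑G.1) *
      betaMatrix (flatMobius M) (flatRank M) F G := by
  rw [betaInv_mMinor (mem_flatsF.1 F.2) (mem_flatsF.1 G.2) hFG, betaMatrix, Matrix.sub_apply,
    Matrix.diagonal_apply_ne _ hFG.ne, sub_zero, mul_diagonal_mul_zetaMatrix_apply]
  rw [← sum_flatMobius_mul (fun H => (rk M ↑H : ℤ)) F G]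
  simp only [flatRank]

lemma mem_flatInsert {i : Fin m} (hi : i ∈ M.E) (G : FlatLattice M) :
    i ∈ (flatInsert M i G).1 := by
  have := (mem_flatsF.1 G.2).subset_ground
  rw [← Finset.mem_coe, coe_flatInsert]
  exact M.mem_closure_of_mem (mem_insert i _) (insert_subset hi this)

lemma flatInsert_le_iff {i : Fin m} (hi : i ∈ M.E) (G H : FlatLattice M) (hH : i ∈ H.1) :
    flatInsert M i G ≤ H ↔ G ≤ H := by
  have hGE := (mem_flatsF.1 G.2).subset_ground
  have hE := insert_subset hi hGE
  have hHF := mem_flatsF.1 H.2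
  have h1 : flatInsert M i G ≤ H ↔ M.closure (insert i ↑G.1) ⊆ (↑H.1 : Set (Fin m)) := by
    rw [← coe_flatInsert, Finset.coe_subset]
    rfl
  have h2 : G ≤ H ↔ (↑G.1 : Set (Fin m)) ⊆ ↑H.1 := by
    rw [Finset.coe_subset]; rfl
  rw [h1, h2]
  constructor
  · exact fun h => (subset_insert _ _).trans ((M.subset_closure _ hE).trans h)
  · intro h
    rw [← hHF.closure]
    exact M.closure_subset_closure (insert_subset (by exact_mod_cast hH) h)

lemma flatRank_flatInsert {i : Fin m} (hi : i ∈ M.E) (G : FlatLattice M) :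
    flatRank M (flatInsert M i G) = flatRank M G + 1 - if i ∈ G.1 then 1 else 0 := by
  have hGF := mem_flatsF.1 G.2
  have hc : (rk M ↑(flatInsert M i G).1 : ℕ∞) = M.eRk (insert i ↑G.1) := by
    rw [cast_rk, coe_flatInsert, eRk_closure_eq]
  by_cases h : i ∈ G.1
  · rw [insert_eq_of_mem (by exact_mod_cast h), ← cast_rk] at hc
    have : rk M ↑(flatInsert M i G).1 = rk M ↑G.1 := by exact_mod_cast hc
    simp [flatRank, this, h]
  · rw [eRk_insert_eq_add_one (by rw [hGF.closure]; exact ⟨hi, by exact_mod_cast h⟩),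
      ← cast_rk] at hc
    have : rk M ↑(flatInsert M i G).1 = rk M ↑G.1 + 1 := by exact_mod_cast hc
    simp [flatRank, this, h]

/-- The `i`-th coordinate of the vector `∑_G β(M|G/F)·β(M|F'/G)·e_G`. -/
lemma sum_betaInv_mul_eq (F F' : FlatLattice M) (i : Fin m) :
    (∑ G ∈ flatsF M with F.1 ⊂ G ∧ G ⊂ F'.1,
      betaInv (mMinor M ↑G ↑F.1) * betaInv (mMinor M ↑F'.1 ↑G) * if i ∈ G then 1 else 0) =
    (-1) ^ (rk M ↑F.1 + rk M ↑F'.1) * (betaMatrix (flatMobius M) (flatRank M) *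
      indicatorMatrix (fun G : FlatLattice M => i ∈ G.1) *
      betaMatrix (flatMobius M) (flatRank M)) F F' := by
  rw [Finset.sum_filter, ← Finset.sum_coe_sort (flatsF M), Matrix.mul_apply, Finset.mul_sum]
  refine Finset.sum_congr rfl fun G _ => ?_
  rw [indicatorMatrix, Matrix.mul_diagonal]
  by_cases h : F.1 ⊂ G.1 ∧ G.1 ⊂ F'.1
  · rw [if_pos h]
    have h1 : F < G := h.1
    have h2 : G < F' := h.2
    rw [betaInv_mMinor_eq_betaMatrix F G h1, betaInv_mMinor_eq_betaMatrix G F' h2]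
    have hs : ((-1 : ℤ) ^ (rk M ↑G.1)) * (-1) ^ (rk M ↑G.1) = 1 := by
      rw [← mul_pow]; simp
    rw [pow_add, pow_add, pow_add]
    linear_combination ((-1) ^ rk M ↑F.1 * (-1) ^ rk M ↑F'.1 *
      betaMatrix (flatMobius M) (flatRank M) F G * betaMatrix (flatMobius M) (flatRank M) G F' *
      (if i ∈ G.1 then 1 else 0)) * hs
  · rw [if_neg h]
    by_cases h1 : F < G
    · have h2 : betaMatrix (flatMobius M) (flatRank M) G F' = 0 := by
        by_cases hG : G ≤ F'
        · rcases hG.eq_or_lt with rfl | hlt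
          · exact betaMatrix_apply_self flatMobius_mul_zeta flatMobius_apply_of_not_le _ _
          · exact absurd ⟨h1, hlt⟩ h
        · exact betaMatrix_apply_of_not_le flatMobius_apply_of_not_le _ hG
      simp [h2]
    · have h2 : betaMatrix (flatMobius M) (flatRank M) F G = 0 := by
        by_cases hG : F ≤ G
        · rcases hG.eq_or_lt with rfl | hlt
          · exact betaMatrix_apply_self flatMobius_mul_zeta flatMobius_apply_of_not_le _ _
          · exact absurd hlt h1
        · exact betaMatrix_apply_of_not_le flatMobius_apply_of_not_le _ hG
      simp [h2]

lemma sum_betaInv_mul_congr (F F' : FlatLattice M) {i k : Fin m} (hi : i ∈ F'.1 \ F.1)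
    (hk : k ∈ F'.1 \ F.1) :
    (∑ G ∈ flatsF M with F.1 ⊂ G ∧ G ⊂ F'.1,
      betaInv (mMinor M ↑G ↑F.1) * betaInv (mMinor M ↑F'.1 ↑G) * if i ∈ G then 1 else 0) =
    ∑ G ∈ flatsF M with F.1 ⊂ G ∧ G ⊂ F'.1,
      betaInv (mMinor M ↑G ↑F.1) * betaInv (mMinor M ↑F'.1 ↑G) * if k ∈ G then 1 else 0 := by
  have key : ∀ l ∈ F'.1 \ F.1, 2 * (betaMatrix (flatMobius M) (flatRank M) *
      indicatorMatrix (fun G : FlatLattice M => l ∈ G.1) *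
      betaMatrix (flatMobius M) (flatRank M)) F F' =
      (betaMatrix (flatMobius M) (flatRank M) * betaMatrix (flatMobius M) (flatRank M)) F F' +
        (1 + flatRank M F - flatRank M F') * betaMatrix (flatMobius M) (flatRank M) F F' := by
    intro l hl
    rw [Finset.mem_sdiff] at hl
    have hlE : l ∈ M.E := (mem_flatsF.1 F'.2).subset_ground (by exact_mod_cast hl.1)
    exact two_mul_beta_indicator_beta flatMobius_mul_zeta flatMobius_apply_of_not_le
      (fun _ _ hab h => hab h) (fun G H hH => flatInsert_le_iff hlE G H hH) (mem_flatInsert hlE)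
      (flatRank_flatInsert hlE) hl.2 hl.1
  rw [sum_betaInv_mul_eq, sum_betaInv_mul_eq,
    mul_left_cancel₀ two_ne_zero ((key i hi).trans (key k hk).symm)]

end FlatLattice

/-- Let `M` be a loopless matroid on `{0,…,n}` and let `F ⊊ F'` be flats
of `M`.  Then `∑_G β(M|G/F)·β(M|F'/G)·e_{G∖F}`, summed over all flats `G` with
`F ⊊ G ⊊ F'`, is a scalar multiple of `e_{F'∖F}`. -/
theorem csm_interval_balanced {n : ℕ} (M : Matroid (Fin (n + 1)))
    (hE : M.E = Set.univ) (hM : mLoopless M)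
    (F F' : Finset (Fin (n + 1))) (hF : M.IsFlat ↑F) (hF' : M.IsFlat ↑F') (hFF' : F ⊂ F') :
    ∃ c : ℝ,
      ∑ G ∈ (flatsF M).filter (fun G => F ⊂ G ∧ G ⊂ F'),
        ((betaInv (mMinor M ↑G ↑F) * betaInv (mMinor M ↑F' ↑G) : ℤ) : ℝ) • eVec (G \ F)
        = c • eVec (F' \ F) := by
  set b : Finset (Fin (n + 1)) → ℤ := fun G =>
    betaInv (mMinor M ↑G ↑F) * betaInv (mMinor M ↑F' ↑G) with hb
  obtain ⟨k, hk⟩ := Finset.sdiff_nonempty.2 hFF'.not_subset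
  have hconst : ∀ i ∈ F' \ F,
      (∑ G ∈ flatsF M with F ⊂ G ∧ G ⊂ F', b G * if i ∈ G then 1 else 0) =
        ∑ G ∈ flatsF M with F ⊂ G ∧ G ⊂ F', b G * if k ∈ G then 1 else 0 := fun i hi =>
    sum_betaInv_mul_congr ⟨F, mem_flatsF.2 hF⟩ ⟨F', mem_flatsF.2 hF'⟩ hi hk
  refine ⟨((∑ G ∈ flatsF M with F ⊂ G ∧ G ⊂ F', b G * if k ∈ G then 1 else 0 : ℤ) : ℝ), ?_⟩
  ext i
  rw [Finset.sum_apply]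
  simp only [Pi.smul_apply, smul_eq_mul, eVec]
  by_cases hi : i ∈ F' \ F
  · rw [if_pos hi, mul_one, ← hconst i hi]
    push_cast
    have hiF := (Finset.mem_sdiff.1 hi).2
    refine Finset.sum_congr rfl fun G _ => ?_
    simp [hiF, hb]
  · rw [if_neg hi, mul_zero]
    refine Finset.sum_eq_zero fun G hG => ?_
    have hGF' := (Finset.mem_filter.1 hG).2.2.subset
    rw [if_neg fun h => hi (Finset.sdiff_subset_sdiff hGF' subset_rfl h), mul_zero]
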